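/- arXiv:2501.17249 — 2 statements merged into one kernel-verified Lean document; each statement's English description precedes it below -/
import Mathlib

section
/- Let S be a full-dimensional alcoved simplex in H_n, i.e., a simplex of dimension n−1 all of whose facet outer normals are parallel to roots e_i - e_j. Then there exists a cyclic order (i.e., a nondegenerate ordered set partition) S' = (i_1, i_2, ..., i_n) of [n] such that the normal fan of S equals the normal fan of the alcoved simplex Δ_{S'}. -/
/-- The face of `P` in direction `w`: the set of points of `P` maximizing `⟨w, ·⟩`. -/
def faceOf {n : ℕ} (P : Set (Fin n → ℝ)) (w : Fin n → ℝ) : Set (Fin n → ℝ) :=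
  {x ∈ P | ∀ y ∈ P, (∑ i, w i * y i) ≤ ∑ i, w i * x i}

/-!
Each barycentric coordinate of a full-dimensional alcoved simplex in `H_n` is a positive multiple
of the slack `a i j - (x i - x j)` of one of the defining inequalities, which gives a digraph on
`[n]` with one weighted edge per facet. The coordinates sum to `1`, so the weights form a
circulation; the coordinates determine a point, so the digraph is connected. With `n` vertices and
`n` edges, every vertex then has in- and out-degree one, and the digraph is a single directed
cycle. Reading the inequalities along this cycle, based at the vertex of the simplex opposite to
one facet, shows that the simplex is a translate of a positive dilate of some `Δ_{S'}`.
-/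

open Set Equiv
open scoped Pointwise

section Faces

variable {n : ℕ}

theorem mem_faceOf_iff_dotProduct {P : Set (Fin n → ℝ)} {w x : Fin n → ℝ} :
    x ∈ faceOf P w ↔ x ∈ P ∧ ∀ y ∈ P, w ⬝ᵥ y ≤ w ⬝ᵥ x :=
  Iff.rfl

variable (P : Set (Fin n → ℝ)) (w : Fin n → ℝ)

theorem faceOf_vadd (z : Fin n → ℝ) : faceOf (z +ᵥ P) w = z +ᵥ faceOf P w := by
  ext x
  obtain ⟨x, rfl⟩ := (AddAction.toPerm z).surjective x
  simp only [AddAction.toPerm_apply, vadd_mem_vadd_set_iff, mem_faceOf_iff_dotProduct]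
  simp only [← image_vadd, forall_mem_image, vadd_eq_add, dotProduct_add, add_le_add_iff_left]

theorem faceOf_smul {c : ℝ} (hc : 0 < c) : faceOf (c • P) w = c • faceOf P w := by
  ext x
  obtain ⟨x, rfl⟩ := (MulAction.toPerm (Units.mk0 c hc.ne')).surjective x
  simp only [MulAction.toPerm_apply, Units.smul_mk0, smul_mem_smul_set_iff₀ hc.ne',
    mem_faceOf_iff_dotProduct]
  simp only [← image_smul, forall_mem_image, dotProduct_smul, smul_eq_mul,
    mul_le_mul_iff_right₀ hc]

theorem faceOf_vadd_smul_eq_iff (z : Fin n → ℝ) {c : ℝ} (hc : 0 < c) (w' : Fin n → ℝ) :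
    faceOf (z +ᵥ c • P) w = faceOf (z +ᵥ c • P) w' ↔ faceOf P w = faceOf P w' := by
  have hinj : Function.Injective fun y : Fin n → ℝ => c • y := smul_right_injective _ hc.ne'
  rw [faceOf_vadd, faceOf_vadd, vadd_left_cancel_iff, faceOf_smul _ _ hc, faceOf_smul _ _ hc]
  exact hinj.image_injective.eq_iff

end Faces

section SimplexFacets

variable {ι κ : Type*}

theorem affineMap_apply_eq_sum_coord_smul {R V P M : Type*} [Ring R] [AddCommGroup V] [Module R V]
    [AddTorsor V P] [AddCommGroup M] [Module R M] [Fintype ι] (b : AffineBasis ι R P)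
    (f : P →ᵃ[R] M) (x : P) : f x = ∑ i, b.coord i x • f (b i) := by
  have hsum := b.sum_coord_apply_eq_one x
  conv_lhs => rw [← b.affineCombination_coord_eq_self x]
  rw [Finset.map_affineCombination _ _ _ hsum,
    Finset.affineCombination_eq_linear_combination _ _ _ hsum]
  rfl

theorem exists_coord_eq_zero_forall_ne_coord_pos {K V P : Type*} [Field K] [LinearOrder K]
    [IsStrictOrderedRing K] [AddCommGroup V] [Module K V] [AddTorsor V P] [Finite ι] [Nontrivial ι]
    (b : AffineBasis ι K P) (k : ι) : ∃ g, b.coord k g = 0 ∧ ∀ i ≠ k, 0 < b.coord i g := by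
  classical
  cases nonempty_fintype ι
  set s : Finset ι := Finset.univ.erase k
  obtain ⟨j, hj⟩ := exists_ne k
  have hs : s.Nonempty := ⟨j, by simp [s, hj]⟩
  have hsum := s.sum_centroidWeights_eq_one_of_nonempty K hs
  refine ⟨s.centroid K b, ?_, fun i hi => ?_⟩
  · exact b.coord_apply_combination_of_notMem (Finset.notMem_erase k _) hsum
  · rw [Finset.centroid_def, b.coord_apply_combination_of_mem (by simp [s, hi]) hsum]
    simpa using hs

theorem exists_eq_zero_pos_of_forall_lineMap_neg {V P : Type*} [AddCommGroup V] [Module ℝ V]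
    [AddTorsor V P] [Finite κ] {s : κ → P →ᵃ[ℝ] ℝ} {p g : P}
    (hg : ∀ m, 0 ≤ s m g) (hbeyond : ∀ t > (1 : ℝ), ∃ m, s m (AffineMap.lineMap p g t) < 0) :
    ∃ m, s m g = 0 ∧ 0 < s m p := by
  by_contra! hp
  have hev : ∀ᶠ t : ℝ in nhdsWithin 1 (Ioi 1), ∀ m, 0 ≤ s m (AffineMap.lineMap p g t) := by
    refine Filter.eventually_all.2 fun m => ?_
    simp only [AffineMap.apply_lineMap, AffineMap.lineMap_apply_ring]
    rcases (hg m).eq_or_lt with hzero | hpos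
    · filter_upwards [self_mem_nhdsWithin] with t ht
      have ht : 1 < t := ht
      nlinarith [hp m hzero.symm]
    · have hcont : Continuous fun t : ℝ => (1 - t) * s m p + t * s m g := by fun_prop
      have hlim := (hcont.tendsto 1).mono_left (nhdsWithin_le_nhds (s := Ioi 1))
      exact (hlim.eventually_const_lt (by simpa using hpos)).mono fun _ => le_of_lt
  obtain ⟨t, hnonneg, ht⟩ := (hev.and self_mem_nhdsWithin).exists
  obtain ⟨m, hm⟩ := hbeyond t ht
  exact (hnonneg m).not_gt hm

/- The ray from `b k` through a relative interior point `g` of the opposite facet violates one and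
the same constraint arbitrarily soon after `g`, so this constraint is tight on the whole facet. -/
theorem exists_constraint_eq_mul_coord {E : Type*} [AddCommGroup E] [Module ℝ E] [Finite ι]
    [Nontrivial ι] [Finite κ] (b : AffineBasis ι ℝ E) {s : κ → E →ᵃ[ℝ] ℝ}
    (hs : convexHull ℝ (range b) = {x | ∀ m, 0 ≤ s m x}) (k : ι) :
    ∃ m, ∃ c > 0, ∀ x, s m x = c * b.coord k x := by
  classical
  cases nonempty_fintype ι
  obtain ⟨g, hgk, hg⟩ := exists_coord_eq_zero_forall_ne_coord_pos b k
  have hmem : ∀ x, (∀ m, 0 ≤ s m x) ↔ ∀ i, 0 ≤ b.coord i x := fun x =>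
    Set.ext_iff.1 (hs.symm.trans b.convexHull_eq_nonneg_coord) x
  have hvertex : ∀ m i, 0 ≤ s m (b i) := fun m i =>
    (hmem (b i)).2 (fun j => by rw [b.coord_apply]; split_ifs <;> simp) m
  have hg_nonneg : ∀ i, 0 ≤ b.coord i g := fun i => by
    obtain rfl | hi := eq_or_ne i k
    exacts [hgk.ge, (hg i hi).le]
  obtain ⟨m, hmg, hmk⟩ : ∃ m, s m g = 0 ∧ 0 < s m (b k) := by
    refine exists_eq_zero_pos_of_forall_lineMap_neg ((hmem g).2 hg_nonneg) fun t ht => ?_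
    by_contra! hin
    have := (hmem _).1 hin k
    simp only [AffineMap.apply_lineMap, AffineMap.lineMap_apply_ring, b.coord_apply_eq, hgk] at this
    linarith
  have htight : ∀ i ≠ k, s m (b i) = 0 := fun i hi => by
    rw [affineMap_apply_eq_sum_coord_smul b, Finset.sum_eq_zero_iff_of_nonneg
      fun j _ => smul_nonneg (hg_nonneg j) (hvertex m j)] at hmg
    exact (smul_eq_zero.1 (hmg i (Finset.mem_univ i))).resolve_left (hg i hi).ne'
  refine ⟨m, s m (b k), hmk, fun x => ?_⟩
  rw [affineMap_apply_eq_sum_coord_smul b, Fintype.sum_eq_single k fun i hi => by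
    rw [htight i hi, smul_zero], smul_eq_mul, mul_comm]

theorem exists_affineBasis_submodule_coe_eq [Fintype ι] {k M : Type*} [DivisionRing k]
    [AddCommGroup M] [Module k M] {W : Submodule k M} [FiniteDimensional k W] {V : ι → M}
    (hV : AffineIndependent k V)
    (hVW : ∀ i, V i ∈ W) (hcard : Fintype.card ι = Module.finrank k W + 1) :
    ∃ b : AffineBasis ι k W, ∀ i, (b i : M) = V i := by
  set V' : ι → W := fun i => ⟨V i, hVW i⟩
  have hV' : AffineIndependent k V' := AffineIndependent.of_comp W.subtype.toAffineMap hV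
  exact ⟨⟨V', hV', (hV'.affineSpan_eq_top_iff_card_eq_finrank_add_one).2 hcard⟩, fun _ => rfl⟩

end SimplexFacets

section Circulations

variable {ι κ : Type*}

/-- The weights `w k` on the edges `J k → I k` of a digraph with vertex set `ι` form a circulation:
inflow equals outflow at every vertex. The balance is tested against potentials `f` on the
vertices; indicator functions of single vertices recover the usual condition. -/
def IsCirculation [Fintype κ] (I J : κ → ι) (w : κ → ℝ) : Prop :=
  ∀ f : ι → ℝ, ∑ k, w k * f (I k) = ∑ k, w k * f (J k)

/-- Connectedness of the digraph with edges `J k → I k`, in the form in which barycentric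
coordinates provide it: a potential that is constant along every edge is constant. -/
def EdgesConnected (I J : κ → ι) : Prop :=
  ∀ f : ι → ℝ, (∀ k, f (I k) = f (J k)) → ∀ u v, f u = f v

theorem IsCirculation.symm [Fintype κ] {I J : κ → ι} {w : κ → ℝ} (h : IsCirculation I J w) :
    IsCirculation J I w :=
  fun f => (h f).symm

theorem EdgesConnected.symm {I J : κ → ι} (h : EdgesConnected I J) : EdgesConnected J I :=
  fun f hf => h f fun k => (hf k).symm

theorem IsCirculation.surjective [Fintype κ] [Nontrivial ι] {I J : κ → ι} {w : κ → ℝ}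
    (hcirc : IsCirculation I J w) (hw : ∀ k, 0 < w k) (hconn : EdgesConnected I J) :
    Function.Surjective I := by
  classical
  intro v
  by_contra! hI
  set f : ι → ℝ := Pi.single v 1
  have hfI : ∀ k, f (I k) = 0 := fun k => Pi.single_eq_of_ne (hI k) 1
  have hnonneg : 0 ≤ f := Pi.single_nonneg.2 zero_le_one
  have hbalance : ∑ k, w k * f (J k) = 0 := by simp [← hcirc f, hfI]
  have hfJ : ∀ k, f (J k) = 0 := fun k => by
    rw [Finset.sum_eq_zero_iff_of_nonneg fun k _ => mul_nonneg (hw k).le (hnonneg _)] at hbalance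
    exact (mul_eq_zero.1 (hbalance k (Finset.mem_univ k))).resolve_left (hw k).ne'
  obtain ⟨u, hu⟩ := exists_ne v
  have := hconn f (fun k => (hfI k).trans (hfJ k).symm) v u
  simp [f, hu] at this

theorem exists_conj_finRotate {n : ℕ} {ρ : Perm (Fin n)} (hρ : ∀ u v, ρ.SameCycle u v) :
    ∃ σ : Perm (Fin n), ∀ k, ρ (σ k) = σ (finRotate n k) := by
  rcases subsingleton_or_nontrivial (Fin n) with _ | hn
  · exact ⟨1, fun _ => Subsingleton.elim _ _⟩
  have htwo : 2 ≤ n := Fin.nontrivial_iff_two_le.1 hn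
  have hon : ρ.IsCycleOn univ := ⟨by simp, fun u _ v _ => hρ u v⟩
  have hcycle : ρ.IsCycle :=
    Perm.isCycle_iff_exists_isCycleOn.2 ⟨univ, nontrivial_univ, hon, fun _ _ => mem_univ _⟩
  have hsupport : ρ.support = Finset.univ := Finset.eq_univ_of_forall fun v =>
    Perm.mem_support.2 (hon.apply_ne nontrivial_univ (mem_univ v))
  obtain ⟨σ, hσ⟩ := isConj_iff.1 <| ((isCycle_finRotate_of_le htwo).isConj_iff hcycle).2
    (by rw [hsupport, support_finRotate_of_le htwo])
  exact ⟨σ, fun k => by simp [← hσ]⟩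

theorem EdgesConnected.exists_cyclic_enumeration {n : ℕ} {I J : κ → Fin n}
    (hconn : EdgesConnected I J) (hI : Function.Bijective I) (hJ : Function.Bijective J) :
    ∃ (σ : Perm (Fin n)) (e : Fin n ≃ κ), ∀ k, J (e k) = σ k ∧ I (e k) = σ (finRotate n k) := by
  classical
  set eJ := Equiv.ofBijective J hJ
  set ρ : Perm (Fin n) := eJ.symm.trans (Equiv.ofBijective I hI)
  have hρ : ∀ k, ρ (J k) = I k := fun k => congrArg I (eJ.symm_apply_apply k)
  have hcycle : ∀ u v, ρ.SameCycle u v := fun u v => by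
    have hconst := hconn (fun t => if ρ.SameCycle u t then 1 else 0)
      (fun k => by simp only [← hρ, Perm.sameCycle_apply_right]) u v
    by_contra hne
    simp [hne, Perm.SameCycle.refl] at hconst
  obtain ⟨σ, hσ⟩ := exists_conj_finRotate hcycle
  have he : ∀ k, J (eJ.symm (σ k)) = σ k := fun k => eJ.apply_symm_apply (σ k)
  exact ⟨σ, σ.trans eJ.symm, fun k => ⟨he k, by rw [← hσ, ← he k, hρ]; rfl⟩⟩

end Circulations

section ZeroSum

variable {ι κ : Type*} [Fintype ι]

/-- The hyperplane `H_n` of vectors with coordinate sum zero, as the ambient space in which a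
simplex with `n` vertices is full-dimensional. -/
def zeroSum (ι : Type*) [Fintype ι] : Submodule ℝ (ι → ℝ) :=
  LinearMap.ker (∑ i, LinearMap.proj i : (ι → ℝ) →ₗ[ℝ] ℝ)

theorem mem_zeroSum {x : ι → ℝ} : x ∈ zeroSum ι ↔ ∑ i, x i = 0 := by
  simp [zeroSum]

theorem finrank_zeroSum_add_one [Nonempty ι] :
    Module.finrank ℝ (zeroSum ι) + 1 = Fintype.card ι := by
  have hne : (∑ i, LinearMap.proj i : (ι → ℝ) →ₗ[ℝ] ℝ) ≠ 0 := fun h => by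
    simpa using LinearMap.congr_fun h 1
  rw [zeroSum, Module.Dual.finrank_ker_add_one_of_ne_zero hne, Module.finrank_pi]

theorem exists_zeroSum_add_const [Nonempty ι] (f : ι → ℝ) :
    ∃ x : zeroSum ι, ∃ r : ℝ, ∀ i, f i = x.1 i + r := by
  set r : ℝ := (∑ i, f i) / Fintype.card ι
  refine ⟨⟨fun i => f i - r, mem_zeroSum.2 ?_⟩, r, fun i => (sub_add_cancel _ _).symm⟩
  simp [r, Finset.sum_sub_distrib, mul_div_cancel₀]

/-- The affine function on `H_n` measuring the slack in the inequality `x i - x j ≤ r`. -/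
def rootSlack (i j : ι) (r : ℝ) : zeroSum ι →ᵃ[ℝ] ℝ :=
  let coordinate (l : ι) : zeroSum ι →ₗ[ℝ] ℝ := LinearMap.proj l ∘ₗ (zeroSum ι).subtype
  AffineMap.const ℝ _ r - (coordinate i - coordinate j).toAffineMap

@[simp]
theorem rootSlack_apply (i j : ι) (r : ℝ) (x : zeroSum ι) :
    rootSlack i j r x = r - (x.1 i - x.1 j) :=
  rfl

variable {b : AffineBasis κ ℝ (zeroSum ι)} {I J : κ → ι} {r c : κ → ℝ}

theorem isCirculation_of_rootSlack_eq [Fintype κ] [Nonempty ι] (hc : ∀ k, c k ≠ 0)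
    (h : ∀ k x, rootSlack (I k) (J k) (r k) x = c k * b.coord k x) :
    IsCirculation I J fun k => (c k)⁻¹ := by
  intro f
  obtain ⟨x, q, hf⟩ := exists_zeroSum_add_const f
  have hcoord : ∀ y k, (c k)⁻¹ * rootSlack (I k) (J k) (r k) y = b.coord k y := fun y k => by
    rw [h, inv_mul_cancel_left₀ (hc k)]
  have hdiff : ∀ k, f (I k) - f (J k) =
      rootSlack (I k) (J k) (r k) 0 - rootSlack (I k) (J k) (r k) x := fun k => by
    simp [hf]
  rw [← sub_eq_zero, ← Finset.sum_sub_distrib]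
  simp only [← mul_sub, hdiff]
  simp only [mul_sub, hcoord, Finset.sum_sub_distrib, b.sum_coord_apply_eq_one, sub_self]

theorem edgesConnected_of_rootSlack_eq [Finite κ] [Nonempty ι] (hc : ∀ k, c k ≠ 0)
    (h : ∀ k x, rootSlack (I k) (J k) (r k) x = c k * b.coord k x) : EdgesConnected I J := by
  intro f hf u v
  obtain ⟨x, q, hx⟩ := exists_zeroSum_add_const f
  have hzero : x = 0 := b.ext_elem fun k => mul_left_cancel₀ (hc k) <| by
    have hk : x.1 (I k) = x.1 (J k) := add_right_cancel <| by rw [← hx, ← hx, hf]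
    simp [← h, hk]
  simp [hx, hzero]

end ZeroSum

section AlcovedSimplex

variable {n : ℕ}

/-- The alcoved simplex `Δ_{S'}` of the cyclic order `S' = (σ 0, …, σ n)` of `Fin (n + 1)`. Its
inequalities are indexed by the steps `σ k → σ (k + 1)` of the cycle, the last of which returns to
`σ 0` and carries the constant `1`. -/
def alcovedSimplex (σ : Perm (Fin (n + 1))) : Set (Fin (n + 1) → ℝ) :=
  {x | ∑ i, x i = 0 ∧ ∀ k, x (σ (finRotate _ k)) - x (σ k) ≤ if k = Fin.last n then 1 else 0}

theorem mem_vadd_smul_alcovedSimplex {σ : Perm (Fin (n + 1))} {x z : Fin (n + 1) → ℝ} {c : ℝ}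
    (hz : z ∈ zeroSum (Fin (n + 1))) (hc : 0 < c) :
    x ∈ z +ᵥ c • alcovedSimplex σ ↔ x ∈ zeroSum (Fin (n + 1)) ∧
      ∀ k, x (σ (finRotate _ k)) - x (σ k) ≤
        z (σ (finRotate _ k)) - z (σ k) + c * if k = Fin.last n then 1 else 0 := by
  rw [mem_vadd_set_iff_neg_vadd_mem, mem_smul_set_iff_inv_smul_mem₀ hc.ne', alcovedSimplex,
    mem_ofPred_eq, ← mem_zeroSum, Submodule.smul_mem_iff _ (inv_ne_zero hc.ne'), vadd_eq_add,
    Submodule.add_mem_iff_right _ (neg_mem hz)]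
  refine and_congr_right fun _ => forall_congr' fun k => ?_
  simp only [Pi.smul_apply, Pi.add_apply, Pi.neg_apply, smul_eq_mul, ← mul_sub,
    inv_mul_le_iff₀ hc]
  constructor <;> intro h <;> linarith

theorem alcovedSimplex_eq_setOf (σ : Perm (Fin (n + 1))) :
    alcovedSimplex σ = {x | ∑ i, x i = 0 ∧
      (∀ k : Fin (n + 1), ∀ h : (k : ℕ) + 1 < n + 1, x (σ ⟨k + 1, h⟩) ≤ x (σ k)) ∧
      x (σ 0) - 1 ≤ x (σ (Fin.last n))} := by
  ext x
  refine and_congr_right fun _ => ?_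
  rw [Fin.forall_fin_succ', Fin.forall_fin_succ']
  refine and_congr ?_ ?_
  · simp [Fin.castSucc_ne_last, Fin.succ]
  · simp only [finRotate_last, if_true, sub_le_comm]

theorem image_convexHull_eq_vadd_smul_alcovedSimplex
    {b : AffineBasis (Fin (n + 1)) ℝ (zeroSum (Fin (n + 1)))} {σ e : Perm (Fin (n + 1))}
    {r c : Fin (n + 1) → ℝ} (hc : ∀ k, 0 < c k)
    (h : ∀ k x, rootSlack (σ (finRotate _ k)) (σ k) (r k) x = c k * b.coord (e k) x) :
    Subtype.val '' convexHull ℝ (range b) =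
      (b (e (Fin.last n)) : Fin (n + 1) → ℝ) +ᵥ c (Fin.last n) • alcovedSimplex σ := by
  set z := b (e (Fin.last n)) with hz
  have hr : ∀ k, z.1 (σ (finRotate _ k)) - z.1 (σ k) +
      c (Fin.last n) * (if k = Fin.last n then 1 else 0) = r k := fun k => by
    have hk := h k z
    simp only [rootSlack_apply, hz, b.coord_apply, e.injective.eq_iff] at hk ⊢
    split_ifs at hk ⊢ with hlast
    · rw [hlast] at hk ⊢; linarith
    · linarith
  have hcoord : ∀ x, (∀ i, 0 ≤ b.coord i x) ↔
      ∀ k, x.1 (σ (finRotate _ k)) - x.1 (σ k) ≤ r k := fun x => by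
    rw [← e.forall_congr_right]
    refine forall_congr' fun k => ?_
    rw [← mul_nonneg_iff_of_pos_left (hc k), ← h, rootSlack_apply, sub_nonneg]
  ext x
  rw [mem_vadd_smul_alcovedSimplex z.2 (hc _), b.convexHull_eq_nonneg_coord]
  simp only [hr, mem_image, mem_ofPred_eq, hcoord]
  exact ⟨fun ⟨y, hy, hyx⟩ => hyx ▸ ⟨y.2, hy⟩, fun ⟨hx, hxr⟩ => ⟨⟨x, hx⟩, hxr, rfl⟩⟩

theorem exists_cyclic_rootSlack_eq_mul_coord
    (b : AffineBasis (Fin (n + 1)) ℝ (zeroSum (Fin (n + 1))))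
    {a : Fin (n + 1) → Fin (n + 1) → ℝ}
    (hb : convexHull ℝ (range b) = {x | ∀ i j, 0 ≤ rootSlack i j (a i j) x}) :
    ∃ (σ e : Perm (Fin (n + 1))) (r c : Fin (n + 1) → ℝ), (∀ k, 0 < c k) ∧
      ∀ k x, rootSlack (σ (finRotate _ k)) (σ k) (r k) x = c k * b.coord (e k) x := by
  rcases n.eq_zero_or_pos with rfl | hn
  · exact ⟨1, 1, 1, 1, fun _ => one_pos, fun k x => by simp⟩
  have : Nontrivial (Fin (n + 1)) := Fin.nontrivial_iff_two_le.2 (by lia)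
  have hfacet := exists_constraint_eq_mul_coord b
    (s := fun p : Fin (n + 1) × Fin (n + 1) => rootSlack p.1 p.2 (a p.1 p.2))
    (by simpa only [Prod.forall] using hb)
  choose p c hc hslack using hfacet
  have hcirc := isCirculation_of_rootSlack_eq (fun k => (hc k).ne') hslack
  have hconn := edgesConnected_of_rootSlack_eq (fun k => (hc k).ne') hslack
  have hpos : ∀ k, 0 < (c k)⁻¹ := fun k => inv_pos.2 (hc k)
  have hI := Finite.surjective_iff_bijective.1 (hcirc.surjective hpos hconn)
  have hJ := Finite.surjective_iff_bijective.1 (hcirc.symm.surjective hpos hconn.symm)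
  obtain ⟨σ, e, he⟩ := hconn.exists_cyclic_enumeration hI hJ
  refine ⟨σ, e, fun k => a (p (e k)).1 (p (e k)).2, c ∘ e, fun k => hc _, fun k x => ?_⟩
  rw [← (he k).1, ← (he k).2]
  exact hslack (e k) x

end AlcovedSimplex

/-- Every full-dimensional alcoved simplex in `H_n` (an alcoved polytope which is
the convex hull of `n` affinely independent points) has the same normal fan as the
alcoved simplex `Δ_{S'}` of some cyclic order `S'` of `[n]`, i.e. of the polytope
`x_{σ 0} ≥ x_{σ 1} ≥ ... ≥ x_{σ (n-1)} ≥ x_{σ 0} - 1` in `H_n`.  Equality of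
normal fans is expressed by: two directions pick the same face of one polytope
iff they pick the same face of the other. -/
theorem stmt11 {n : ℕ} (hn : 0 < n) (S : Set (Fin n → ℝ))
    (a : Fin n → Fin n → ℝ)
    (halc : S = {x : Fin n → ℝ | (∑ i, x i) = 0 ∧ ∀ i j, x i - x j ≤ a i j})
    (V : Fin n → (Fin n → ℝ)) (hV : AffineIndependent ℝ V)
    (hSV : S = convexHull ℝ (Set.range V)) :
    ∃ σ : Equiv.Perm (Fin n), ∃ Δ : Set (Fin n → ℝ),
      Δ = {x : Fin n → ℝ | (∑ i, x i) = 0 ∧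
          (∀ k : Fin n, ∀ h : (k : ℕ) + 1 < n, x (σ ⟨(k : ℕ) + 1, h⟩) ≤ x (σ k)) ∧
          x (σ ⟨0, hn⟩) - 1 ≤ x (σ ⟨n - 1, Nat.sub_lt hn one_pos⟩)} ∧
      ∀ w w' : Fin n → ℝ,
        faceOf S w = faceOf S w' ↔ faceOf Δ w = faceOf Δ w' := by
  obtain ⟨m, rfl⟩ : ∃ m, n = m + 1 := Nat.exists_eq_succ_of_ne_zero hn.ne'
  have hVsum : ∀ i, V i ∈ zeroSum (Fin (m + 1)) := fun i => by
    have hVi : V i ∈ S := hSV ▸ subset_convexHull ℝ _ (mem_range_self i)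
    exact mem_zeroSum.2 (halc ▸ hVi).1
  obtain ⟨b, hb⟩ := exists_affineBasis_submodule_coe_eq hV hVsum finrank_zeroSum_add_one.symm
  have hSb : S = Subtype.val '' convexHull ℝ (range b) := by
    rw [hSV, ← funext hb, range_comp' Subtype.val]
    exact ((zeroSum _).subtype.image_convexHull _).symm
  have hconstraints : convexHull ℝ (range b) = {x | ∀ i j, 0 ≤ rootSlack i j (a i j) x} := by
    rw [← preimage_image_eq (convexHull ℝ (range b)) Subtype.val_injective, ← hSb, halc]
    ext x
    simp [mem_zeroSum.1 x.2]
  obtain ⟨σ, e, r, c, hc, hslack⟩ := exists_cyclic_rootSlack_eq_mul_coord b hconstraints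
  refine ⟨σ, alcovedSimplex σ, alcovedSimplex_eq_setOf σ, fun w w' => ?_⟩
  rw [hSb, image_convexHull_eq_vadd_smul_alcovedSimplex hc hslack]
  exact faceOf_vadd_smul_eq_iff _ _ _ (hc _) _
end

section
/- Let S, T be nondegenerate ordered set partitions (cyclic orders) of [n] that are 4-interlaced: there exist distinct a, b, c, d such that the restriction of S to {a,b,c,d} is the cyclic order (a,b,c,d) and the restriction of T is (c,b,a,d). Then the graph G_{S,T} = G_S ∪ G_T^op contains a violating cycle, namely the 4-cycle a → b (upper), b → c (lower), c → d (upper), d → a (lower). -/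
/-- Four elements appear in this cyclic order in the cyclic sequence `j`. -/
def CycOrd4 {n : ℕ} (j : ℕ → Fin n) (a b c d : Fin n) : Prop :=
  ∃ t1 t2 t3 t4 : ℕ, t1 < t2 ∧ t2 < t3 ∧ t3 < t4 ∧ t4 < t1 + n ∧
    j t1 = a ∧ j t2 = b ∧ j t3 = c ∧ j t4 = d

/-!
Interpret the 4-cycle `a → b → c → d → a` as a closed walk: follow `S` from `a` to `b`, then `T`
backwards to `c`, then `S` to `d`, then `T` backwards to `a`. If an upper arc and a lower arc meet
in an interior vertex `x` of both, they share an endpoint, and replacing that endpoint by `x`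
shortens both of them while keeping `a, b, c, d` interlaced. So in a shortest such walk the arcs
meet only at `a, b, c, d`: it is a cycle, and its upper arcs from `a` to `b` and from `c` to `d`
are two runs.
-/

open Set

theorem injOn_Ico_of_periodic {α : Type*} {f : ℕ → α} {n : ℕ} (hf : Function.Periodic f n)
    (hinj : InjOn f (Iio n)) (a : ℕ) : InjOn f (Ico a (a + n)) := by
  intro p hp q hq hpq
  have hn : 0 < n := by grind
  have hmod : p % n = q % n :=
    hinj (Nat.mod_lt p hn) (Nat.mod_lt q hn) (by rwa [hf.map_mod_nat, hf.map_mod_nat])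
  exact Nat.mod_injOn_Ico a n (by simpa using hp) (by simpa using hq) hmod

theorem apply_add_one_mod {α : Type*} {f : ℕ → α} {L : ℕ} (hL : 0 < L) (hf : f L = f 0) (t : ℕ) :
    f ((t + 1) % L) = f (t % L + 1) := by
  rw [← Nat.mod_add_mod]
  rcases (Nat.succ_le_of_lt (Nat.mod_lt t hL)).lt_or_eq with hlt | heq
  · rw [Nat.mod_eq_of_lt hlt]
  · rw [show t % L + 1 = L from heq, Nat.mod_self, hf]

theorem nodup_append_alternating {α : Type*} {p₁ q₁ p₂ q₂ : List α} (hp : (p₁ ++ p₂).Nodup)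
    (hq : (q₁ ++ q₂).Nodup) (hpq : (p₁ ++ p₂).Disjoint (q₁ ++ q₂)) :
    (p₁ ++ (q₁ ++ (p₂ ++ q₂))).Nodup := by
  simp only [List.nodup_append, List.Disjoint, List.mem_append] at *
  grind

theorem nodup_map_Ico_append_map_Ico {α : Type*} {f : ℕ → α} {a b c d : ℕ}
    (hf : InjOn f (Ico a b ∪ Ico c d)) (hbc : b ≤ c) :
    ((List.Ico a b).map f ++ (List.Ico c d).map f).Nodup := by
  rw [← List.map_append]
  refine List.Nodup.map_on (fun p hp q hq => hf (by simpa using hp) (by simpa using hq)) ?_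
  refine (List.Ico.nodup a b).append (List.Ico.nodup c d) fun p hp hp' => ?_
  rw [List.Ico.mem] at hp hp'
  omega

section Walks

variable {α : Type*} {S T : ℕ → α} {x y z : α} {l l' : List (α × Bool)}

/-- An edge from `x` to `y` in `G_S ∪ G_T^op`, the graphs being given by the sequences `S` and `T`;
the label `b` is `true` for an upper edge and `false` for a lower one. -/
def IsEdge (S T : ℕ → α) (b : Bool) (x y : α) : Prop :=
  if b then ∃ r, S r = x ∧ S (r + 1) = y else ∃ r, T r = y ∧ T (r + 1) = x

/-- A violating cycle of length `L` in `G_S ∪ G_T^op`, with vertices `v` and edge labels `U` indexed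
periodically by `ℕ`: it is simple, and its maximal upper runs, counted by their last edges, are at
least two. -/
structure IsViolatingCycle (S T : ℕ → α) (L : ℕ) (v : ℕ → α) (U : ℕ → Bool) : Prop where
  two_le : 2 ≤ L
  vertex_periodic : ∀ t, v (t + L) = v t
  label_periodic : ∀ t, U (t + L) = U t
  isEdge : ∀ t, IsEdge S T (U t) (v t) (v (t + 1))
  vertex_inj : ∀ s t, s < L → t < L → v s = v t → s = t
  two_runs : ∃ t₁ t₂, t₁ < t₂ ∧ t₂ < L ∧
    U t₁ = true ∧ U (t₁ + 1) = false ∧ U t₂ = true ∧ U (t₂ + 1) = false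

/-- `IsWalk S T x l y`: a walk from `x` to `y` in `G_S ∪ G_T^op`. The list `l` records, for each
edge, its starting vertex and its label, so it omits the final vertex `y`. -/
inductive IsWalk (S T : ℕ → α) : α → List (α × Bool) → α → Prop
  | nil (x : α) : IsWalk S T x [] x
  | cons {x y z : α} {b : Bool} {l : List (α × Bool)} (hxy : IsEdge S T b x y)
      (hyz : IsWalk S T y l z) : IsWalk S T x ((x, b) :: l) z

namespace IsWalk

theorem append (hxy : IsWalk S T x l y) (hyz : IsWalk S T y l' z) : IsWalk S T x (l ++ l') z := by
  induction hxy with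
  | nil => exact hyz
  | cons hedge _ ih => exact .cons hedge (ih hyz)

theorem map_fst_getD_zero (h : IsWalk S T x l y) : (l.map Prod.fst).getD 0 y = x := by
  cases h <;> rfl

theorem isEdge_getD (h : IsWalk S T x l y) (b : Bool) {k : ℕ} (hk : k < l.length) :
    IsEdge S T ((l.map Prod.snd).getD k b) ((l.map Prod.fst).getD k y)
      ((l.map Prod.fst).getD (k + 1) y) := by
  induction h generalizing k with
  | nil => exact absurd hk k.not_lt_zero
  | cons hedge hwalk ih =>
    simp only [List.map_cons, List.getD_cons_succ]
    cases k with
    | zero => rwa [List.getD_cons_zero, List.getD_cons_zero, hwalk.map_fst_getD_zero]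
    | succ k => exact ih (Nat.lt_of_succ_lt_succ hk)

end IsWalk

/-- The vertices `S p, ..., S (q - 1)`, each labelled as the start of an upper edge. -/
def upperArc (S : ℕ → α) (p q : ℕ) : List (α × Bool) :=
  (List.Ico p q).map fun i => (S i, true)

/-- The vertices `T q, ..., T (p + 1)`, each labelled as the start of a lower edge. -/
def lowerArc (T : ℕ → α) (p q : ℕ) : List (α × Bool) :=
  ((List.Ico (p + 1) (q + 1)).map fun i => (T i, false)).reverse

theorem map_fst_upperArc (S : ℕ → α) (p q : ℕ) :
    (upperArc S p q).map Prod.fst = (List.Ico p q).map S := by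
  simp [upperArc, Function.comp_def]

theorem exists_map_snd_upperArc_eq_append (S : ℕ → α) {p q : ℕ} (hpq : p < q) :
    ∃ w, (upperArc S p q).map Prod.snd = w ++ [true] := by
  obtain ⟨m, rfl⟩ := Nat.exists_eq_add_of_lt hpq
  refine ⟨List.replicate m true, ?_⟩
  simp [upperArc, List.Ico.succ_top (Nat.le_add_right p m), Function.comp_def]

theorem map_fst_lowerArc (T : ℕ → α) (p q : ℕ) :
    (lowerArc T p q).map Prod.fst = ((List.Ico (p + 1) (q + 1)).map T).reverse := by
  simp [lowerArc, Function.comp_def]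

theorem exists_map_snd_lowerArc_eq_cons (T : ℕ → α) {p q : ℕ} (hpq : p < q) :
    ∃ w, (lowerArc T p q).map Prod.snd = false :: w := by
  obtain ⟨m, rfl⟩ := Nat.exists_eq_add_of_lt hpq
  refine ⟨List.replicate m false, ?_⟩
  simp [lowerArc, List.Ico.succ_top (show p + 1 ≤ p + m + 1 by omega), Function.comp_def]

theorem isWalk_upperArc (S T : ℕ → α) {p q : ℕ} (hpq : p ≤ q) :
    IsWalk S T (S p) (upperArc S p q) (S q) := by
  induction q, hpq using Nat.le_induction with
  | base => simpa [upperArc] using IsWalk.nil (S p)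
  | succ q hpq ih =>
    have hedge : IsEdge S T true (S q) (S (q + 1)) := ⟨q, rfl, rfl⟩
    simpa [upperArc, List.Ico.succ_top hpq] using ih.append (.cons hedge (.nil _))

theorem isWalk_lowerArc (S T : ℕ → α) {p q : ℕ} (hpq : p ≤ q) :
    IsWalk S T (T q) (lowerArc T p q) (T p) := by
  induction q, hpq using Nat.le_induction with
  | base => simpa [lowerArc] using IsWalk.nil (T p)
  | succ q hpq ih =>
    have hedge : IsEdge S T false (T (q + 1)) (T q) := ⟨q, rfl, rfl⟩
    simpa [lowerArc, List.Ico.succ_top (Nat.succ_le_succ hpq)] using IsWalk.cons hedge ih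

theorem IsWalk.isViolatingCycle (h : IsWalk S T x l x) (hnodup : (l.map Prod.fst).Nodup)
    {w₁ w₂ w₃ : List Bool}
    (hlabel : l.map Prod.snd = w₁ ++ true :: false :: (w₂ ++ true :: false :: w₃)) :
    IsViolatingCycle S T l.length (fun t => (l.map Prod.fst).getD (t % l.length) x)
      (fun t => (l.map Prod.snd).getD (t % l.length) false) := by
  have hlength : l.length = w₁.length + 2 + w₂.length + 2 + w₃.length := by
    have := congrArg List.length hlabel
    grind
  have hpos : 0 < l.length := by omega
  have hclosed : (l.map Prod.fst).getD l.length x = (l.map Prod.fst).getD 0 x := by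
    rw [h.map_fst_getD_zero, List.getD_eq_default _ _ (List.length_map _).le]
  constructor
  case two_le => omega
  case vertex_periodic => exact fun t => by rw [Nat.add_mod_right]
  case label_periodic => exact fun t => by rw [Nat.add_mod_right]
  case isEdge =>
    intro t
    rw [apply_add_one_mod (f := fun k => (l.map Prod.fst).getD k x) hpos hclosed]
    exact h.isEdge_getD false (Nat.mod_lt t hpos)
  case vertex_inj =>
    intro s t hs ht hst
    refine (hnodup.getElem_inj_iff (hi := by simpa using hs) (hj := by simpa using ht)).1 ?_
    simpa [Nat.mod_eq_of_lt hs, Nat.mod_eq_of_lt ht, hs, ht] using hst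
  case two_runs =>
    refine ⟨w₁.length, w₁.length + 2 + w₂.length, by omega, by omega, ?_⟩
    rw [Nat.mod_eq_of_lt, Nat.mod_eq_of_lt, Nat.mod_eq_of_lt, Nat.mod_eq_of_lt, hlabel] <;> grind

end Walks

/-- Positions in the sequences `S` and `T` exhibiting a 4-interlacing: four vertices occur in the
order `a, b, c, d` along an injective stretch of `S`, and in the order `c, b, a, d` along an
injective stretch of `T`. -/
structure Interlacing {α : Type*} (S T : ℕ → α) where
  (s₁ s₂ s₃ s₄ t₁ t₂ t₃ t₄ : ℕ)
  upper_lt : s₁ < s₂ ∧ s₂ < s₃ ∧ s₃ < s₄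
  lower_lt : t₁ < t₂ ∧ t₂ < t₃ ∧ t₃ < t₄
  injOn_upper : InjOn S (Icc s₁ s₄)
  injOn_lower : InjOn T (Icc t₁ t₄)
  eq_a : S s₁ = T t₃
  eq_b : S s₂ = T t₂
  eq_c : S s₃ = T t₁
  eq_d : S s₄ = T t₄

namespace Interlacing

variable {α : Type*} {S T : ℕ → α}

/-- The length of the closed walk that follows `S` from `a` to `b`, `T` backwards from `b` to `c`,
`S` from `c` to `d`, and `T` backwards from `d` to `a`. -/
def length (I : Interlacing S T) : ℕ :=
  (I.s₂ - I.s₁) + (I.t₂ - I.t₁) + (I.s₄ - I.s₃) + (I.t₄ - I.t₃)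

theorem exists_length_lt (I : Interlacing S T) {p q : ℕ}
    (hp : p ∈ Ioo I.s₁ I.s₂ ∪ Ioo I.s₃ I.s₄) (hq : q ∈ Ioo I.t₁ I.t₂ ∪ Ioo I.t₃ I.t₄)
    (hpq : S p = T q) : ∃ J : Interlacing S T, J.length < I.length := by
  obtain ⟨s₁, s₂, s₃, s₄, t₁, t₂, t₃, t₄, ⟨s₁₂, s₂₃, s₃₄⟩, ⟨t₁₂, t₂₃, t₃₄⟩,
    hS, hT, ha, hb, hc, hd⟩ := I
  simp only [length]
  rcases hp with ⟨hp, hp'⟩ | ⟨hp, hp'⟩ <;> rcases hq with ⟨hq, hq'⟩ | ⟨hq, hq'⟩ <;>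
    dsimp only at hp hp' hq hq'
  · exact ⟨⟨s₁, p, s₃, s₄, t₁, q, t₃, t₄, ⟨hp, hp'.trans s₂₃, s₃₄⟩, ⟨hq, hq'.trans t₂₃, t₃₄⟩,
      hS, hT, ha, hpq, hc, hd⟩, by dsimp only; omega⟩
  · exact ⟨⟨p, s₂, s₃, s₄, t₁, t₂, q, t₄, ⟨hp', s₂₃, s₃₄⟩, ⟨t₁₂, t₂₃.trans hq, hq'⟩,
      hS.mono (Icc_subset_Icc_left hp.le), hT, hpq, hb, hc, hd⟩, by dsimp only; omega⟩
  · exact ⟨⟨s₁, s₂, p, s₄, q, t₂, t₃, t₄, ⟨s₁₂, s₂₃.trans hp, hp'⟩, ⟨hq', t₂₃, t₃₄⟩,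
      hS, hT.mono (Icc_subset_Icc_left hq.le), ha, hb, hpq, hd⟩, by dsimp only; omega⟩
  · exact ⟨⟨s₁, s₂, s₃, p, t₁, t₂, t₃, q, ⟨s₁₂, s₂₃, hp⟩, ⟨t₁₂, t₂₃, hq⟩,
      hS.mono (Icc_subset_Icc_right hp'.le), hT.mono (Icc_subset_Icc_right hq'.le),
      ha, hb, hc, hpq⟩, by dsimp only; omega⟩

/-- No vertex is interior both to an upper and to a lower arc of `I`; by injectivity the upper arcs
then meet the lower ones only at `a`, `b`, `c`, `d`, and the closed walk along them is simple. -/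
def IsReduced (I : Interlacing S T) : Prop :=
  ∀ p ∈ Ioo I.s₁ I.s₂ ∪ Ioo I.s₃ I.s₄, ∀ q ∈ Ioo I.t₁ I.t₂ ∪ Ioo I.t₃ I.t₄, S p ≠ T q

theorem exists_isReduced (I : Interlacing S T) : ∃ J : Interlacing S T, J.IsReduced := by
  have : Nonempty (Interlacing S T) := ⟨I⟩
  refine ⟨Function.argmin length, fun p hp q hq hpq => ?_⟩
  obtain ⟨J, hJ⟩ := exists_length_lt _ hp hq hpq
  exact Function.not_lt_argmin length J hJ

theorem upper_subset (I : Interlacing S T) : Ico I.s₁ I.s₂ ∪ Ico I.s₃ I.s₄ ⊆ Icc I.s₁ I.s₄ := by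
  have := I.upper_lt
  grind

theorem lower_subset (I : Interlacing S T) : Ioc I.t₁ I.t₂ ∪ Ioc I.t₃ I.t₄ ⊆ Icc I.t₁ I.t₄ := by
  have := I.lower_lt
  grind

theorem IsReduced.apply_ne {I : Interlacing S T} (hI : I.IsReduced) {p q : ℕ}
    (hp : p ∈ Ico I.s₁ I.s₂ ∪ Ico I.s₃ I.s₄) (hq : q ∈ Ioc I.t₁ I.t₂ ∪ Ioc I.t₃ I.t₄) :
    S p ≠ T q := by
  intro hpq
  have upper_eq : ∀ s ∈ Icc I.s₁ I.s₄, S s = T q → p = s := fun s hs h =>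
    I.injOn_upper (I.upper_subset hp) hs (hpq.trans h.symm)
  have lower_eq : ∀ t ∈ Icc I.t₁ I.t₄, S p = T t → q = t := fun t ht h =>
    I.injOn_lower (I.lower_subset hq) ht (hpq.symm.trans h)
  have hupper := I.upper_lt
  have hlower := I.lower_lt
  have hp₁ : p ≠ I.s₁ := by
    have := lower_eq I.t₃ (by grind)
    grind [I.eq_a]
  have hp₃ : p ≠ I.s₃ := by
    have := lower_eq I.t₁ (by grind)
    grind [I.eq_c]
  have hq₂ : q ≠ I.t₂ := by
    have := upper_eq I.s₂ (by grind)
    grind [I.eq_b]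
  have hq₄ : q ≠ I.t₄ := by
    have := upper_eq I.s₄ (by grind)
    grind [I.eq_d]
  exact hI p (by grind) q (by grind) hpq

/-- The closed walk through `a`, `b`, `c`, `d` whose length is `I.length`. -/
def walk (I : Interlacing S T) : List (α × Bool) :=
  upperArc S I.s₁ I.s₂ ++ (lowerArc T I.t₁ I.t₂ ++ (upperArc S I.s₃ I.s₄ ++ lowerArc T I.t₃ I.t₄))

theorem isWalk_walk (I : Interlacing S T) : IsWalk S T (S I.s₁) I.walk (S I.s₁) := by
  have hab := isWalk_upperArc S T I.upper_lt.1.le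
  have hbc := isWalk_lowerArc S T I.lower_lt.1.le
  have hcd := isWalk_upperArc S T I.upper_lt.2.2.le
  have hda := isWalk_lowerArc S T I.lower_lt.2.2.le
  rw [← I.eq_b, ← I.eq_c] at hbc
  rw [← I.eq_d, ← I.eq_a] at hda
  exact hab.append (hbc.append (hcd.append hda))

theorem exists_map_snd_walk_eq (I : Interlacing S T) : ∃ w₁ w₂ w₃,
    I.walk.map Prod.snd = w₁ ++ true :: false :: (w₂ ++ true :: false :: w₃) := by
  obtain ⟨u₁, hu₁⟩ := exists_map_snd_upperArc_eq_append S I.upper_lt.1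
  obtain ⟨u₂, hu₂⟩ := exists_map_snd_lowerArc_eq_cons T I.lower_lt.1
  obtain ⟨u₃, hu₃⟩ := exists_map_snd_upperArc_eq_append S I.upper_lt.2.2
  obtain ⟨u₄, hu₄⟩ := exists_map_snd_lowerArc_eq_cons T I.lower_lt.2.2
  refine ⟨u₁, u₂ ++ u₃, u₄, ?_⟩
  simp only [walk, List.map_append, hu₁, hu₂, hu₃, hu₄, List.append_assoc, List.cons_append,
    List.nil_append]

theorem IsReduced.nodup_map_fst_walk {I : Interlacing S T} (hI : I.IsReduced) :
    (I.walk.map Prod.fst).Nodup := by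
  simp only [walk, List.map_append, map_fst_upperArc, map_fst_lowerArc]
  refine nodup_append_alternating ?_ ?_ ?_
  · exact nodup_map_Ico_append_map_Ico (I.injOn_upper.mono I.upper_subset) I.upper_lt.2.1.le
  · rw [← List.reverse_append, List.nodup_reverse, List.nodup_append_comm]
    refine nodup_map_Ico_append_map_Ico (I.injOn_lower.mono ?_) (Nat.succ_le_succ I.lower_lt.2.1.le)
    exact fun q hq => I.lower_subset (by grind)
  · simp only [List.Disjoint, List.mem_append, List.mem_reverse, List.mem_map, List.Ico.mem]
    have := @hI.apply_ne
    grind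

end Interlacing

theorem stmt19_general {α : Type*} {S T : ℕ → α} (I : Interlacing S T) :
    ∃ L v U, IsViolatingCycle S T L v U := by
  obtain ⟨J, hJ⟩ := I.exists_isReduced
  obtain ⟨w₁, w₂, w₃, hlabel⟩ := J.exists_map_snd_walk_eq
  exact ⟨_, _, _, J.isWalk_walk.isViolatingCycle hJ.nodup_map_fst_walk hlabel⟩

theorem CycOrd4.nonempty_interlacing {n : ℕ} {S T : ℕ → Fin n} {a b c d : Fin n}
    (hS : ∀ k, InjOn S (Ico k (k + n))) (hT : ∀ k, InjOn T (Ico k (k + n)))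
    (hS4 : CycOrd4 S a b c d) (hT4 : CycOrd4 T c b a d) : Nonempty (Interlacing S T) := by
  obtain ⟨s₁, s₂, s₃, s₄, s₁₂, s₂₃, s₃₄, s₄₁, rfl, rfl, rfl, rfl⟩ := hS4
  obtain ⟨t₁, t₂, t₃, t₄, t₁₂, t₂₃, t₃₄, t₄₁, hc, hb, ha, hd⟩ := hT4
  exact ⟨⟨s₁, s₂, s₃, s₄, t₁, t₂, t₃, t₄, ⟨s₁₂, s₂₃, s₃₄⟩, ⟨t₁₂, t₂₃, t₃₄⟩,
    (hS s₁).mono (Icc_subset_Ico_right s₄₁), (hT t₁).mono (Icc_subset_Ico_right t₄₁),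
    ha.symm, hb.symm, hc.symm, hd.symm⟩⟩

/-- If the cyclic orders `S`, `T` on `[n]` are `4`-interlaced — on some distinct
`a, b, c, d` the restriction of `S` is the cyclic order `(a,b,c,d)` and that of
`T` is `(c,b,a,d)` — then the graph `G_{S,T} = G_S ∪ G_T^op` contains a violating
cycle: a closed walk `v 0, ..., v L = v 0` whose edges are edges of `G_S` (upper,
`U t = true`) or reversed edges of `G_T` (lower), visiting every vertex at most
once and having at least two disjoint maximal upper path segments. -/
theorem stmt19 {n : ℕ} (hn : 0 < n) (S T : ℕ → Fin n)
    (hSper : ∀ t, S (t + n) = S t) (hTper : ∀ t, T (t + n) = T t)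
    (hSbij : ∀ y : Fin n, ∃! t : ℕ, t < n ∧ S t = y)
    (hTbij : ∀ y : Fin n, ∃! t : ℕ, t < n ∧ T t = y)
    (a b c d : Fin n) (hdist : ([a, b, c, d] : List (Fin n)).Pairwise (· ≠ ·))
    (hS4 : CycOrd4 S a b c d) (hT4 : CycOrd4 T c b a d) :
    ∃ (L : ℕ) (v : ℕ → Fin n) (U : ℕ → Bool),
      2 ≤ L ∧ (∀ t, v (t + L) = v t) ∧ (∀ t, U (t + L) = U t) ∧
      (∀ t, if U t then (∃ r : ℕ, S r = v t ∧ S (r + 1) = v (t + 1))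
        else (∃ r : ℕ, T r = v (t + 1) ∧ T (r + 1) = v t)) ∧
      (∀ s t, s < L → t < L → v s = v t → s = t) ∧
      (∃ t₁ t₂ : ℕ, t₁ < t₂ ∧ t₂ < L ∧
        U t₁ = true ∧ U (t₁ + 1) = false ∧ U t₂ = true ∧ U (t₂ + 1) = false) := by
  obtain ⟨I⟩ := CycOrd4.nonempty_interlacing
    (injOn_Ico_of_periodic hSper fun s hs t ht hst => (hSbij (S t)).unique ⟨hs, hst⟩ ⟨ht, rfl⟩)
    (injOn_Ico_of_periodic hTper fun s hs t ht hst => (hTbij (T t)).unique ⟨hs, hst⟩ ⟨ht, rfl⟩)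
    hS4 hT4
  obtain ⟨L, v, U, h⟩ := stmt19_general I
  exact ⟨L, v, U, h.two_le, h.vertex_periodic, h.label_periodic, h.isEdge, h.vertex_inj, h.two_runs⟩
end
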